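/- For α > 2 and ε > 0, let g_ε(x) = 1/(ε+‖x‖^α) on ℝ². Then the ratio (2π²(α−2)/(ε^{2−2/α}·α²·sin(2π/α)))·((m+1)/m), for any m > 0, equals E[h²]·∫_{ℝ²} g_ε(x)² dx where E[h²] = (m+1)/m; i.e., ∫_{ℝ²} g_ε(x)² dx · (m+1)/m = 2π²(α−2)·(m+1)/(ε^{2−2/α}·α²·sin(2π/α)·m). -/

import Mathlib

open Real MeasureTheory

/-!
In polar coordinates, after the substitution `t = r ^ α`, the integral of `(1 / (ε + ‖x‖ ^ α)) ^ q`
over an `n`-dimensional space becomes a Beta integral of the second kind,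
`∫ t ^ (n / α - 1) * (1 / (ε + t)) ^ q` over `t > 0`. Expanding
`Γ(q) * (1 / (ε + t)) ^ q = ∫ s ^ (q - 1) * exp (-((ε + t) * s))` over `s > 0` and integrating in
`t` first evaluates it as `(1 / ε) ^ (q - n / α) * Β(n / α, q - n / α)`. For `q = n = 2` the Beta
value is elementary by Euler's reflection formula.
-/

open Set ProbabilityTheory Module

lemma integrableOn_rpow_mul_exp_neg_mul_Ioi {a r : ℝ} (ha : 0 < a) (hr : 0 < r) :
    IntegrableOn (fun t : ℝ ↦ t ^ (a - 1) * exp (-(r * t))) (Ioi 0) := by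
  simpa using integrableOn_rpow_mul_exp_neg_mul_rpow (s := a - 1) (by linarith) one_pos hr

lemma rpow_mul_rpow_mul_exp_neg_add_mul (a c ε s t : ℝ) :
    t ^ (a - 1) * (s ^ (c - 1) * exp (-((ε + t) * s))) =
      s ^ (c - 1) * exp (-(ε * s)) * (t ^ (a - 1) * exp (-(s * t))) := by
  rw [show -((ε + t) * s) = -(ε * s) + -(s * t) by ring, exp_add]
  ring

lemma integral_rpow_mul_rpow_mul_exp_neg_add_mul {a s : ℝ} (b ε : ℝ) (ha : 0 < a) (hs : 0 < s) :
    ∫ t in Ioi (0 : ℝ), t ^ (a - 1) * (s ^ (a + b - 1) * exp (-((ε + t) * s))) =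
      Gamma a * (s ^ (b - 1) * exp (-(ε * s))) := by
  have cancel_rpow : s ^ (a + b - 1) * (1 / s) ^ a = s ^ (b - 1) := by
    rw [one_div, inv_rpow hs.le, ← rpow_neg hs.le, ← rpow_add hs]
    ring_nf
  simp_rw [rpow_mul_rpow_mul_exp_neg_add_mul, integral_const_mul,
    integral_rpow_mul_exp_neg_mul_Ioi ha hs, ← cancel_rpow]
  ring

lemma integrable_rpow_mul_rpow_mul_exp_neg_add_mul {a b ε : ℝ} (ha : 0 < a) (hb : 0 < b)
    (hε : 0 < ε) :
    Integrable
      (fun p : ℝ × ℝ ↦ p.2 ^ (a - 1) * (p.1 ^ (a + b - 1) * exp (-((ε + p.2) * p.1))))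
      ((volume.restrict (Ioi 0)).prod (volume.restrict (Ioi 0))) := by
  rw [integrable_prod_iff (by fun_prop)]
  constructor
  · filter_upwards [ae_restrict_mem measurableSet_Ioi] with s hs
    simp_rw [rpow_mul_rpow_mul_exp_neg_add_mul]
    exact (integrableOn_rpow_mul_exp_neg_mul_Ioi ha hs).const_mul _
  · refine ((integrableOn_rpow_mul_exp_neg_mul_Ioi hb hε).const_mul (Gamma a)).congr ?_
    filter_upwards [ae_restrict_mem measurableSet_Ioi] with s (hs : 0 < s)
    rw [← integral_rpow_mul_rpow_mul_exp_neg_add_mul b ε ha hs]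
    refine setIntegral_congr_fun measurableSet_Ioi fun t (ht : 0 < t) ↦ ?_
    exact (norm_of_nonneg (by positivity)).symm

theorem integral_rpow_mul_one_div_add_rpow_Ioi {a b ε : ℝ} (ha : 0 < a) (hb : 0 < b)
    (hε : 0 < ε) :
    ∫ t in Ioi (0 : ℝ), t ^ (a - 1) * (1 / (ε + t)) ^ (a + b) = (1 / ε) ^ b * beta a b := by
  have hΓ : Gamma (a + b) ≠ 0 := (Gamma_pos_of_pos (add_pos ha hb)).ne'
  have gamma_mul_integral :
      (∫ t in Ioi (0 : ℝ), t ^ (a - 1) * (1 / (ε + t)) ^ (a + b)) * Gamma (a + b) =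
        Gamma a * ((1 / ε) ^ b * Gamma b) :=
    calc
      _ = ∫ t in Ioi (0 : ℝ), ∫ s in Ioi (0 : ℝ),
            t ^ (a - 1) * (s ^ (a + b - 1) * exp (-((ε + t) * s))) := by
        rw [← integral_mul_const]
        refine setIntegral_congr_fun measurableSet_Ioi fun t (ht : 0 < t) ↦ ?_
        simp only [integral_const_mul,
          integral_rpow_mul_exp_neg_mul_Ioi (add_pos ha hb) (add_pos hε ht), mul_assoc]
      _ = ∫ s in Ioi (0 : ℝ), ∫ t in Ioi (0 : ℝ),
            t ^ (a - 1) * (s ^ (a + b - 1) * exp (-((ε + t) * s))) :=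
        (integral_integral_swap (integrable_rpow_mul_rpow_mul_exp_neg_add_mul ha hb hε)).symm
      _ = ∫ s in Ioi (0 : ℝ), Gamma a * (s ^ (b - 1) * exp (-(ε * s))) :=
        setIntegral_congr_fun measurableSet_Ioi fun s hs ↦
          integral_rpow_mul_rpow_mul_exp_neg_add_mul b ε ha hs
      _ = Gamma a * ((1 / ε) ^ b * Gamma b) := by
        rw [integral_const_mul, integral_rpow_mul_exp_neg_mul_Ioi hb hε]
  rw [eq_div_of_mul_eq hΓ gamma_mul_integral, beta]
  ring

lemma beta_two_sub {s : ℝ} (hs : s ≠ 1) : beta s (2 - s) = (1 - s) * (π / sin (π * s)) := by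
  rw [beta, add_sub_cancel, Gamma_two, div_one, show 2 - s = 1 - s + 1 by ring,
    Gamma_add_one (sub_ne_zero.mpr hs.symm), ← Gamma_mul_Gamma_one_sub]
  ring

lemma integral_rpow_smul_comp_rpow_Ioi {F : Type*} [NormedAddCommGroup F] [NormedSpace ℝ F]
    {α : ℝ} (hα : 0 < α) (d : ℝ) (f : ℝ → F) :
    ∫ r in Ioi (0 : ℝ), r ^ (d - 1) • f (r ^ α) =
      α⁻¹ • ∫ t in Ioi (0 : ℝ), t ^ (d / α - 1) • f t := by
  rw [← integral_comp_rpow_Ioi_of_pos (g := fun t ↦ t ^ (d / α - 1) • f t) hα, ← integral_smul]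
  refine setIntegral_congr_fun measurableSet_Ioi fun r (hr : 0 < r) ↦ ?_
  have exponents : r ^ (α - 1) * (r ^ α) ^ (d / α - 1) = r ^ (d - 1) := by
    rw [← rpow_mul hr.le, ← rpow_add hr]
    congr 1
    field_simp
    ring
  simp only [smul_smul, mul_assoc, exponents, inv_mul_cancel_left₀ hα.ne']

theorem integral_one_div_add_norm_rpow_rpow {E : Type*} [NormedAddCommGroup E] [NormedSpace ℝ E]
    [FiniteDimensional ℝ E] [Nontrivial E] [MeasurableSpace E] [BorelSpace E]
    (μ : Measure E) [μ.IsAddHaarMeasure] {α ε q : ℝ} (hα : 0 < α) (hε : 0 < ε)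
    (hq : finrank ℝ E / α < q) :
    ∫ x, (1 / (ε + ‖x‖ ^ α)) ^ q ∂μ =
      finrank ℝ E / α * μ.real (Metric.ball 0 1) *
        ((1 / ε) ^ (q - finrank ℝ E / α) * beta (finrank ℝ E / α) (q - finrank ℝ E / α)) := by
  have finrank_pos : 0 < finrank ℝ E := Module.finrank_pos
  have radial : ∫ r in Ioi (0 : ℝ), r ^ (finrank ℝ E - 1) • (1 / (ε + r ^ α)) ^ q =
      α⁻¹ * ((1 / ε) ^ (q - finrank ℝ E / α) *
        beta (finrank ℝ E / α) (q - finrank ℝ E / α)) := by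
    rw [← integral_rpow_mul_one_div_add_rpow_Ioi (by positivity) (sub_pos.mpr hq) hε,
      add_sub_cancel]
    simpa only [← Nat.cast_pred finrank_pos, rpow_natCast, smul_eq_mul] using
      integral_rpow_smul_comp_rpow_Ioi hα (finrank ℝ E) fun t ↦ (1 / (ε + t)) ^ q
  rw [integral_fun_norm_addHaar μ fun r ↦ (1 / (ε + r ^ α)) ^ q, radial, nsmul_eq_mul, smul_eq_mul]
  ring

theorem variance_formula_core_general (α ε m : ℝ) (hα : 1 < α) (hα₂ : α ≠ 2) (hε : 0 < ε)
    (hm : m ≠ 0) :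
    (∫ x : EuclideanSpace ℝ (Fin 2), (1 / (ε + ‖x‖ ^ α)) ^ 2) * ((m + 1) / m) =
      2 * π ^ 2 * (α - 2) * (m + 1) /
        (ε ^ (2 - 2 / α) * α ^ 2 * Real.sin (2 * π / α) * m) := by
  have hα₀ : 0 < α := by linarith
  have area_unit_disc : volume.real (Metric.ball (0 : EuclideanSpace ℝ (Fin 2)) 1) = π := by
    simp [Measure.real, pi_nonneg]
  have integral_eq := integral_one_div_add_norm_rpow_rpow
    (volume : Measure (EuclideanSpace ℝ (Fin 2))) (q := 2) hα₀ hε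
    (by simpa [div_lt_iff₀ hα₀] using hα)
  simp only [rpow_two, finrank_euclideanSpace_fin, Nat.cast_ofNat, area_unit_disc] at integral_eq
  rw [integral_eq, beta_two_sub (by rwa [ne_eq, div_eq_one_iff_eq hα₀.ne', eq_comm]), one_div,
    inv_rpow hε.le, show π * (2 / α) = 2 * π / α by ring]
  field_simp

/-- For `α > 2`, `ε > 0` and `m > 0`, with `g_ε(x) = 1/(ε+‖x‖^α)` on `ℝ²`,
`(∫_{ℝ²} g_ε(x)² dx) · (m+1)/m = 2π²(α−2)·(m+1)/(ε^(2−2/α)·α²·sin(2π/α)·m)`. -/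
theorem variance_formula_core (α ε m : ℝ) (hα : 2 < α) (hε : 0 < ε) (hm : 0 < m) :
    (∫ x : EuclideanSpace ℝ (Fin 2), (1 / (ε + ‖x‖ ^ α)) ^ 2) * ((m + 1) / m) =
      2 * π ^ 2 * (α - 2) * (m + 1) /
        (ε ^ (2 - 2 / α) * α ^ 2 * Real.sin (2 * π / α) * m) :=
  variance_formula_core_general α ε m (one_lt_two.trans hα) hα.ne' hε hm.ne'
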